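/- Every finite tree can be drawn as a witness Gabriel graph: for every finite connected acyclic simple graph T on a vertex set V, there exist an injective map φ : V → ℝ² and a finite set W ⊆ ℝ² such that for all distinct u, v ∈ V, u and v are adjacent in T if and only if (D(φ(u),φ(v)) \ {φ(u),φ(v)}) ∩ W = ∅. -/

import Mathlib

open scoped RealInnerProductSpace

noncomputable section

/-- The Euclidean plane. -/
abbrev Pt := EuclideanSpace ℝ (Fin 2)

/-- The closed disk with diameter `ab`. -/
def diskD (a b : Pt) : Set Pt := Metric.closedBall (midpoint ℝ a b) (dist a b / 2)

/-- `a` and `b` are adjacent in the witness Gabriel graph with witness set `W`. -/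
def gabrielEdge (W : Set Pt) (a b : Pt) : Prop := (diskD a b \ {a, b}) ∩ W = ∅

/-- General position: no three points collinear, no four points concyclic. -/
def GenPos (S : Set Pt) : Prop :=
  (∀ a ∈ S, ∀ b ∈ S, ∀ c ∈ S, a ≠ b → a ≠ c → b ≠ c → ¬ Collinear ℝ ({a, b, c} : Set Pt)) ∧
  (∀ a ∈ S, ∀ b ∈ S, ∀ c ∈ S, ∀ d ∈ S, a ≠ b → a ≠ c → a ≠ d → b ≠ c → b ≠ d → c ≠ d →
    ¬ EuclideanGeometry.Cospherical ({a, b, c, d} : Set Pt))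

/-- Planar determinant `u₁v₂ − u₂v₁`. -/
def det2 (u v : Pt) : ℝ := u 0 * v 1 - u 1 * v 0

/-- Counterclockwise convex position. -/
def CCWConvexPos {m : ℕ} (q : Fin m → Pt) : Prop :=
  ∀ i j k : Fin m, i < j → j < k → 0 < det2 (q j - q i) (q k - q i)

/-- Cyclic successor in `Fin m`. -/
def cyclicSucc {m : ℕ} (hm : 0 < m) (i : Fin m) : Fin m :=
  ⟨((i : ℕ) + 1) % m, Nat.mod_lt _ hm⟩

/-!
By Thales' theorem a point `c` lies in the closed disk with diameter `ab` iff `⟪a - c, b - c⟫ ≤ 0`.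
Every finite forest has a drawing in which all of these inequalities are strict, by induction on the
number of vertices. A nonempty forest has a vertex `a` that is isolated, or a leaf at a vertex `q`
with at most one further neighbour, or a leaf with the same neighbour as another leaf `q`. In a
drawing of the forest without `a`, an isolated `a` can be placed far away. In the other cases `q` is
split into two points very close together, with a new witness next to them: at the scale of the
splitting, the disk of the only edge at `q` is a half-plane, so it remains to exhibit three points
of the plane satisfying explicit inequalities.
-/

open Bornology Filter Topology

section InnerProduct

variable {E : Type*} [NormedAddCommGroup E] [InnerProductSpace ℝ E]

theorem inner_sub_sub_eq_dist_midpoint_sq_sub (a b c : E) :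
    ⟪a - c, b - c⟫ = dist c (midpoint ℝ a b) ^ 2 - (dist a b / 2) ^ 2 := by
  have hc : c - midpoint ℝ a b = -((1 / 2 : ℝ) • ((a - c) + (b - c))) := by
    rw [midpoint_eq_smul_add, invOf_eq_inv]
    module
  have hab : a - b = (a - c) - (b - c) := (sub_sub_sub_cancel_right a b c).symm
  rw [dist_eq_norm, dist_eq_norm, hc, hab, norm_neg, norm_smul, mul_pow, div_pow,
    norm_add_sq_real, norm_sub_sq_real (a - c) (b - c)]
  norm_num
  ring

theorem mem_closedBall_midpoint_iff_inner_nonpos {a b c : E} :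
    c ∈ Metric.closedBall (midpoint ℝ a b) (dist a b / 2) ↔ ⟪a - c, b - c⟫ ≤ 0 := by
  rw [Metric.mem_closedBall, ← sq_le_sq₀ dist_nonneg (by positivity),
    inner_sub_sub_eq_dist_midpoint_sq_sub, sub_nonpos]

theorem eventually_cobounded_inner_sub_sub_pos (a b : E) :
    ∀ᶠ c in cobounded E, 0 < ⟪a - c, b - c⟫ := by
  filter_upwards [Metric.isBounded_closedBall (x := midpoint ℝ a b) (r := dist a b / 2)] with c hc
  exact not_le.1 fun h => hc (mem_closedBall_midpoint_iff_inner_nonpos.2 h)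

theorem exists_inner_sub_pos_and_inner_sub_two_smul_pos [Nontrivial E] {S : Set E}
    (hS : S.Finite) :
    ∃ c : E, ∀ x ∈ S, ∀ y ∈ S,
      0 < ⟪x - c, y - c⟫ ∧ 0 < ⟪x - (2 : ℝ) • c, y - (2 : ℝ) • c⟫ := by
  have htwice : Tendsto (fun c : E => (2 : ℝ) • c) (cobounded E) (cobounded E) := by
    rw [← tendsto_norm_atTop_iff_cobounded]
    simp only [norm_smul]
    exact tendsto_norm_cobounded_atTop.const_mul_atTop (by norm_num)
  refine Eventually.exists (f := cobounded E) ?_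
  simp only [hS.eventually_all]
  exact fun x _ y _ => (eventually_cobounded_inner_sub_sub_pos x y).and
    (htwice.eventually (eventually_cobounded_inner_sub_sub_pos x y))

theorem tendsto_inner_add_smul_sub (p r s x y z : E) :
    Tendsto (fun t : ℝ => ⟪p + t • x - (s + t • z), r + t • y - (s + t • z)⟫) (𝓝[>] 0)
      (𝓝 ⟪p - s, r - s⟫) := by
  have hcont : Continuous fun t : ℝ => ⟪p + t • x - (s + t • z), r + t • y - (s + t • z)⟫ := by
    fun_prop
  simpa using (hcont.tendsto 0).mono_left nhdsWithin_le_nhds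

theorem inner_add_smul_sub_self (p r x y z : E) (t : ℝ) :
    ⟪p + t • x - (p + t • z), r + t • y - (p + t • z)⟫ =
      t * (⟪x - z, r - p⟫ + t * ⟪x - z, y - z⟫) := by
  have hx : p + t • x - (p + t • z) = t • (x - z) := by module
  have hy : r + t • y - (p + t • z) = (r - p) + t • (y - z) := by module
  rw [hx, hy, real_inner_smul_left, inner_add_right, real_inner_smul_right]

theorem exists_orthogonal_norm_eq (hE : 1 < Module.rank ℝ E) (x : E) :
    ∃ y : E, ⟪x, y⟫ = 0 ∧ ‖y‖ = ‖x‖ := by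
  have hperp : (ℝ ∙ x)ᗮ ≠ ⊥ := by
    rw [Ne, Submodule.orthogonal_eq_bot_iff]
    intro htop
    refine hE.not_ge ?_
    rw [← rank_top, ← htop]
    exact (rank_span_le {x}).trans_eq (Cardinal.mk_singleton x)
  obtain ⟨z, hz, hz0⟩ := Submodule.exists_mem_ne_zero_of_ne_bot hperp
  refine ⟨(‖x‖ / ‖z‖) • z, ?_, ?_⟩
  · rw [real_inner_smul_right, Submodule.mem_orthogonal_singleton_iff_inner_right.1 hz, mul_zero]
  · rw [norm_smul, norm_div, norm_norm, norm_norm, div_mul_cancel₀ _ (norm_ne_zero_iff.2 hz0)]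

theorem inner_smul_add_smul_of_orthogonal {e n : E} (hen : ⟪e, n⟫ = 0) (hn : ‖n‖ = ‖e‖)
    (a b c d : ℝ) : ⟪a • e + b • n, c • e + d • n⟫ = (a * c + b * d) * ‖e‖ ^ 2 := by
  have hne : ⟪n, e⟫ = 0 := by rw [real_inner_comm, hen]
  simp only [inner_add_left, inner_add_right, real_inner_smul_left, real_inner_smul_right,
    real_inner_self_eq_norm_sq, hen, hne, hn]
  ring

end InnerProduct

section Combinatorics

variable {V : Type*} {G : SimpleGraph V}

theorem exists_neighborSet_subsingleton [Finite V] [Nonempty V] (hG : G.IsAcyclic) :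
    ∃ v, (G.neighborSet v).Subsingleton := by
  obtain ⟨u, v, p, hp, hmax⟩ := SimpleGraph.Walk.exists_isPath_forall_isPath_length_le_length G
  have hpen : ∀ w, G.Adj v w → w = p.penultimate := by
    intro w hvw
    refine hG.eq_penultimate_of_adj_end hp hvw ?_
    by_contra hw
    have := hmax _ _ _ (hp.concat hw hvw)
    rw [SimpleGraph.Walk.length_concat] at this
    omega
  exact ⟨v, fun w hw w' hw' => (hpen w hw).trans (hpen w' hw').symm⟩

theorem exists_leaf_of_forall_neighborSet_nonempty [Finite V] [Nonempty V] (hG : G.IsAcyclic)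
    (hne : ∀ v, (G.neighborSet v).Nonempty) :
    ∃ a y, G.neighborSet a = {y} ∧
      (G.neighborSet y \ {v | (G.neighborSet v).Subsingleton}).Subsingleton := by
  set leaves : Set V := {v | (G.neighborSet v).Subsingleton}
  rcases leavesᶜ.eq_empty_or_nonempty with hall | ⟨w, hw⟩
  · obtain ⟨a⟩ := ‹Nonempty V›
    obtain ⟨y, hay⟩ := hne a
    have ha : a ∈ leaves := Set.compl_empty_iff.1 hall ▸ Set.mem_univ a
    refine ⟨a, y, ha.eq_singleton_of_mem hay, ?_⟩
    rw [Set.sdiff_eq, hall, Set.inter_empty]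
    exact Set.subsingleton_empty
  · have : Nonempty ↥leavesᶜ := ⟨⟨w, hw⟩⟩
    obtain ⟨⟨y, hy⟩, hsub⟩ := exists_neighborSet_subsingleton (hG.induce leavesᶜ)
    have hy_sub : (G.neighborSet y \ leaves).Subsingleton := fun u hu v hv =>
      congrArg Subtype.val (@hsub ⟨u, hu.2⟩ hu.1 ⟨v, hv.2⟩ hv.1)
    obtain ⟨a, hya, ha⟩ : ∃ a ∈ G.neighborSet y, a ∈ leaves := by
      by_contra! hno
      exact hy fun u hu v hv => hy_sub ⟨hu, hno u hu⟩ ⟨hv, hno v hv⟩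
    exact ⟨a, y, ha.eq_singleton_of_mem (SimpleGraph.Adj.symm hya), hy_sub⟩

theorem exists_isolated_or_pendant_or_twin [Finite V] [Nonempty V] (hG : G.IsAcyclic) :
    (∃ a, G.neighborSet a = ∅) ∨
      (∃ a q, G.neighborSet a = {q} ∧ (G.neighborSet q \ {a}).Subsingleton) ∨
      ∃ a q x, q ≠ a ∧ G.neighborSet a = {x} ∧ G.neighborSet q = {x} := by
  by_cases hne : ∀ v, (G.neighborSet v).Nonempty
  swap
  · push Not at hne
    exact Or.inl hne
  obtain ⟨a, y, ha, hy⟩ := exists_leaf_of_forall_neighborSet_nonempty hG hne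
  by_cases hsub : (G.neighborSet y \ {a}).Subsingleton
  · exact Or.inr (Or.inl ⟨a, y, ha, hsub⟩)
  obtain ⟨q, ⟨hyq, hqa⟩, hq⟩ :
      ∃ q ∈ G.neighborSet y \ {a}, (G.neighborSet q).Subsingleton := by
    by_contra hno
    rw [not_exists] at hno
    exact hsub fun u hu v hv => hy ⟨hu.1, fun h => hno u ⟨hu, h⟩⟩ ⟨hv.1, fun h => hno v ⟨hv, h⟩⟩
  exact Or.inr (Or.inr ⟨a, q, y, hqa, ha, hq.eq_singleton_of_mem (SimpleGraph.Adj.symm hyq)⟩)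

end Combinatorics

/-- Equality or adjacency in `G`: the pairs whose closed diameter disks a robust drawing of `G`
keeps clear, equality standing for the degenerate disk at a single vertex. -/
def EqOrAdj {V : Type*} (G : SimpleGraph V) (u v : V) : Prop := u = v ∨ G.Adj u v

theorem EqOrAdj.symm {V : Type*} {G : SimpleGraph V} {u v : V} (h : EqOrAdj G u v) :
    EqOrAdj G v u :=
  h.imp Eq.symm SimpleGraph.Adj.symm

theorem eqOrAdj_iff_of_neighborSet_eq_singleton {V : Type*} {G : SimpleGraph V} {u v x : V}
    (hu : G.neighborSet u = {x}) : EqOrAdj G u v ↔ v = u ∨ v = x :=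
  or_congr eq_comm (Set.ext_iff.1 hu v)

theorem eqOrAdj_induce_iff {V : Type*} {G : SimpleGraph V} {s : Set V} {u v : s} :
    EqOrAdj (G.induce s) u v ↔ EqOrAdj G u v :=
  or_congr Subtype.ext_iff Iff.rfl

/-- A witness Gabriel drawing of `G` all of whose defining conditions are strict, hence stable
under small perturbations. By Thales' theorem `c` lies outside the closed disk with diameter `ab`
iff `0 < ⟪a - c, b - c⟫`, and in its interior iff this inner product is negative. The disks of
edges avoid the other vertices as well as the witnesses, so that a new witness can be put close to
a vertex. -/
structure IsRobustDrawing {V E : Type*} [NormedAddCommGroup E] [InnerProductSpace ℝ E]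
    (G : SimpleGraph V) (φ : V → E) (W : Finset E) : Prop where
  witness_outside : ∀ ⦃u v⦄, EqOrAdj G u v → ∀ w ∈ W, 0 < ⟪φ u - w, φ v - w⟫
  vertex_outside : ∀ ⦃u v⦄, EqOrAdj G u v → ∀ z, z ≠ u → z ≠ v → 0 < ⟪φ u - φ z, φ v - φ z⟫
  witness_inside : ∀ ⦃u v⦄, ¬EqOrAdj G u v → ∃ w ∈ W, ⟪φ u - w, φ v - w⟫ < 0

/-- The graph `G` arises from `H` by splitting the vertex `q` into the fibre of `f` over `q`, keeping
some of the edges at `q` for each of the new vertices. -/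
structure IsSplitting {V V' : Type*} (G : SimpleGraph V) (H : SimpleGraph V') (f : V → V')
    (q : V') : Prop where
  map_eqOrAdj : ∀ ⦃u v⦄, EqOrAdj G u v → EqOrAdj H (f u) (f v)
  eqOrAdj_of_map : ∀ ⦃u v⦄, f u ≠ q → f v ≠ q → EqOrAdj H (f u) (f v) → EqOrAdj G u v
  injective_off : ∀ ⦃u v⦄, f u ≠ q → f u = f v → u = v

section Splitting

variable {V V' E : Type*} [NormedAddCommGroup E] [InnerProductSpace ℝ E]
  {G : SimpleGraph V} {H : SimpleGraph V'} {f : V → V'} {q : V'} {φ : V' → E} {W : Finset E}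
  {d : V → E}

theorem IsRobustDrawing.injective {φ : V → E} (h : IsRobustDrawing G φ W) :
    Function.Injective φ := by
  intro u v huv
  by_contra hne
  have hpos := h.vertex_outside (Or.inl rfl : EqOrAdj G u u) v (Ne.symm hne) (Ne.symm hne)
  rw [huv, sub_self, inner_zero_left] at hpos
  exact hpos.false

theorem IsRobustDrawing.eventually_witness_outside (hφ : IsRobustDrawing H φ W) {u v : V'}
    (huv : EqOrAdj H u v) {w : E} (hw : w ∈ W) (x y : E) :
    ∀ᶠ t : ℝ in 𝓝[>] 0, 0 < ⟪φ u + t • x - w, φ v + t • y - w⟫ := by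
  simpa only [smul_zero, add_zero] using
    (tendsto_inner_add_smul_sub (φ u) (φ v) w x y 0).eventually_const_lt
      (hφ.witness_outside huv w hw)

theorem IsRobustDrawing.eventually_perturbation_outside (hφ : IsRobustDrawing H φ W) {u v : V'}
    (huv : EqOrAdj H u v) (r : V') {x y z : E}
    (hu : u = r → 0 ≤ ⟪x - z, φ v - φ r⟫ ∧ 0 < ⟪x - z, y - z⟫)
    (hv : v = r → 0 ≤ ⟪y - z, φ u - φ r⟫ ∧ 0 < ⟪y - z, x - z⟫) :
    ∀ᶠ t : ℝ in 𝓝[>] 0,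
      0 < ⟪φ u + t • x - (φ r + t • z), φ v + t • y - (φ r + t • z)⟫ := by
  by_cases hur : u = r
  · obtain ⟨hfirst, hsecond⟩ := hu hur
    filter_upwards [self_mem_nhdsWithin] with t (ht : 0 < t)
    rw [hur, inner_add_smul_sub_self]
    positivity
  by_cases hvr : v = r
  · obtain ⟨hfirst, hsecond⟩ := hv hvr
    filter_upwards [self_mem_nhdsWithin] with t (ht : 0 < t)
    rw [hvr, real_inner_comm, inner_add_smul_sub_self]
    positivity
  exact (tendsto_inner_add_smul_sub _ _ _ x y z).eventually_const_lt
    (hφ.vertex_outside huv r (Ne.symm hur) (Ne.symm hvr))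

theorem eventually_perturbation_inside {p r x y z : E}
    (h : ⟪x - z, r - p⟫ < 0 ∨ r = p ∧ ⟪x - z, y - z⟫ < 0) :
    ∀ᶠ t : ℝ in 𝓝[>] 0, ⟪p + t • x - (p + t • z), r + t • y - (p + t • z)⟫ < 0 := by
  simp only [inner_add_smul_sub_self]
  rcases h with hfirst | ⟨rfl, hsecond⟩
  · have hcont : Continuous fun t : ℝ => ⟪x - z, r - p⟫ + t * ⟪x - z, y - z⟫ := by fun_prop
    have hlim := (hcont.tendsto 0).mono_left (nhdsWithin_le_nhds (s := Set.Ioi 0))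
    rw [zero_mul, add_zero] at hlim
    filter_upwards [self_mem_nhdsWithin, hlim.eventually_lt_const hfirst] with t ht hneg
    exact mul_neg_of_pos_of_neg ht hneg
  · filter_upwards [self_mem_nhdsWithin] with t (ht : 0 < t)
    rw [sub_self, inner_zero_right, zero_add]
    exact mul_neg_of_pos_of_neg ht (mul_neg_of_pos_of_neg ht hsecond)

theorem IsRobustDrawing.eventually_exists_witness_inside [DecidableEq E]
    (hφ : IsRobustDrawing H φ W) (hf : IsSplitting G H f q) {x : E}
    (hsep : ∀ u v, ¬EqOrAdj G u v → f u = q → EqOrAdj H q (f v) →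
      ⟪d u - x, φ (f v) - φ q⟫ < 0 ∨ φ (f v) = φ q ∧ ⟪d u - x, d v - x⟫ < 0)
    {u v : V} (huv : ¬EqOrAdj G u v) :
    ∀ᶠ t : ℝ in 𝓝[>] 0, ∃ w ∈ insert (φ q + t • x) W,
      ⟪φ (f u) + t • d u - w, φ (f v) + t • d v - w⟫ < 0 := by
  by_cases hmap : EqOrAdj H (f u) (f v)
  · by_cases hu : f u = q
    · have hnear := eventually_perturbation_inside (hsep u v huv hu (hu ▸ hmap))
      filter_upwards [hnear] with t ht
      exact ⟨_, Finset.mem_insert_self _ _, hu ▸ ht⟩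
    · have hv : f v = q := by_contra fun hv => huv (hf.eqOrAdj_of_map hu hv hmap)
      have hnear := eventually_perturbation_inside
        (hsep v u (fun h => huv h.symm) hv (hv ▸ hmap.symm))
      filter_upwards [hnear] with t ht
      rw [real_inner_comm] at ht
      exact ⟨_, Finset.mem_insert_self _ _, hv ▸ ht⟩
  · obtain ⟨w, hw, hneg⟩ := hφ.witness_inside hmap
    have hnear := (tendsto_inner_add_smul_sub _ _ w (d u) (d v) 0).eventually_lt_const hneg
    simp only [smul_zero, add_zero] at hnear
    filter_upwards [hnear] with t ht
    exact ⟨w, Finset.mem_insert_of_mem hw, ht⟩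

/-- Under the magnification of a neighbourhood of `φ q` by `1 / t`, the new vertices over `q` stand
at the points `d u`, the new witness at `x`, and, as `t → 0`, the disk of an edge from `q` to `f v`
becomes a half-plane orthogonal to `φ (f v) - φ q`. -/
theorem IsRobustDrawing.exists_of_isSplitting [Finite V] (hφ : IsRobustDrawing H φ W)
    (hf : IsSplitting G H f q) (d : V → E) (x : E)
    (hvertex : ∀ u v z, EqOrAdj G u v → f u = q → f z = q → z ≠ u → z ≠ v →
      0 ≤ ⟪d u - d z, φ (f v) - φ q⟫ ∧ 0 < ⟪d u - d z, d v - d z⟫)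
    (hnew : ∀ u v, EqOrAdj G u v → f u = q →
      0 ≤ ⟪d u - x, φ (f v) - φ q⟫ ∧ 0 < ⟪d u - x, d v - x⟫)
    (hsep : ∀ u v, ¬EqOrAdj G u v → f u = q → EqOrAdj H q (f v) →
      ⟪d u - x, φ (f v) - φ q⟫ < 0 ∨ φ (f v) = φ q ∧ ⟪d u - x, d v - x⟫ < 0) :
    ∃ (φ' : V → E) (W' : Finset E), IsRobustDrawing G φ' W' := by
  classical
  let φ' : ℝ → V → E := fun t v => φ (f v) + t • d v
  have hfiber : ∀ {u z}, f u = f z → z ≠ u → f u = q ∧ f z = q := fun {u z} h hzu => by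
    have hz : f z = q := by_contra fun hz => hzu (hf.injective_off hz h.symm)
    exact ⟨h.trans hz, hz⟩
  have hold : ∀ᶠ t in 𝓝[>] (0 : ℝ), ∀ u v, EqOrAdj G u v → ∀ w ∈ W,
      0 < ⟪φ' t u - w, φ' t v - w⟫ := by
    simp only [eventually_all, eventually_all_finset]
    exact fun u v huv w hw =>
      hφ.eventually_witness_outside (hf.map_eqOrAdj huv) hw (d u) (d v)
  have hnew' : ∀ᶠ t in 𝓝[>] (0 : ℝ), ∀ u v, EqOrAdj G u v →
      0 < ⟪φ' t u - (φ q + t • x), φ' t v - (φ q + t • x)⟫ := by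
    simp only [eventually_all]
    exact fun u v huv => hφ.eventually_perturbation_outside (hf.map_eqOrAdj huv) q
      (hnew u v huv) (hnew v u huv.symm)
  have hvertex' : ∀ᶠ t in 𝓝[>] (0 : ℝ), ∀ u v, EqOrAdj G u v → ∀ z, z ≠ u → z ≠ v →
      0 < ⟪φ' t u - φ' t z, φ' t v - φ' t z⟫ := by
    simp only [eventually_all]
    refine fun u v huv z hzu hzv =>
      hφ.eventually_perturbation_outside (hf.map_eqOrAdj huv) (f z) (fun h => ?_) (fun h => ?_)
    · obtain ⟨hu, hz⟩ := hfiber h hzu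
      exact hz ▸ hvertex u v z huv hu hz hzu hzv
    · obtain ⟨hv, hz⟩ := hfiber h hzv
      exact hz ▸ hvertex v u z huv.symm hv hz hzv hzu
  have hsep' : ∀ᶠ t in 𝓝[>] (0 : ℝ), ∀ u v, ¬EqOrAdj G u v →
      ∃ w ∈ insert (φ q + t • x) W, ⟪φ' t u - w, φ' t v - w⟫ < 0 := by
    simp only [eventually_all]
    exact fun u v => hφ.eventually_exists_witness_inside hf hsep
  obtain ⟨t, htold, htnew, htvertex, htsep⟩ :=
    (hold.and (hnew'.and (hvertex'.and hsep'))).exists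
  exact ⟨φ' t, insert (φ q + t • x) W, fun u v huv =>
    Finset.forall_mem_insert _ _ _ |>.2 ⟨htnew u v huv, htold u v huv⟩, htvertex, htsep⟩

theorem IsRobustDrawing.exists_ne_zero_forall_adj_sub_eq [Nontrivial E] (hφ : IsRobustDrawing H φ W)
    (hq : (H.neighborSet q).Subsingleton) : ∃ e : E, e ≠ 0 ∧ ∀ v, H.Adj q v → φ v - φ q = e := by
  rcases hq.eq_empty_or_singleton with hempty | ⟨y, hy⟩
  · obtain ⟨e, he0⟩ := exists_ne (0 : E)
    exact ⟨e, he0, fun v hv => (hempty.subset hv).elim⟩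
  · have hqy : H.Adj q y := hy.superset rfl
    refine ⟨φ y - φ q, sub_ne_zero.2 (hφ.injective.ne hqy.ne'), fun v hv => ?_⟩
    rw [show v = y from hy.subset hv]
/-- The pairs `c u` and `s` are coordinates in an orthogonal frame of two vectors of equal length,
the first one pointing along the only edge of `H` at `q`. -/
theorem IsRobustDrawing.exists_of_isSplitting_of_neighborSet_subsingleton [Finite V]
    (hE : 1 < Module.rank ℝ E)
    (hφ : IsRobustDrawing H φ W) (hf : IsSplitting G H f q)
    (hq : (H.neighborSet q).Subsingleton) (c : V → ℝ × ℝ) (s : ℝ × ℝ)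
    (hvertex : ∀ u v z, EqOrAdj G u v → f u = q → f z = q → z ≠ u → z ≠ v →
      (f v ≠ q → (c z).1 ≤ (c u).1) ∧
        0 < ((c u).1 - (c z).1) * ((c v).1 - (c z).1) + ((c u).2 - (c z).2) * ((c v).2 - (c z).2))
    (hnew : ∀ u v, EqOrAdj G u v → f u = q →
      (f v ≠ q → s.1 ≤ (c u).1) ∧
        0 < ((c u).1 - s.1) * ((c v).1 - s.1) + ((c u).2 - s.2) * ((c v).2 - s.2))
    (hsep : ∀ u v, ¬EqOrAdj G u v → f u = q → EqOrAdj H q (f v) →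
      f v ≠ q ∧ (c u).1 < s.1 ∨
        f v = q ∧ ((c u).1 - s.1) * ((c v).1 - s.1) + ((c u).2 - s.2) * ((c v).2 - s.2) < 0) :
    ∃ (φ' : V → E) (W' : Finset E), IsRobustDrawing G φ' W' := by
  have : Nontrivial E := rank_pos_iff_nontrivial.1 (zero_lt_one.trans hE)
  obtain ⟨e, he0, he⟩ := hφ.exists_ne_zero_forall_adj_sub_eq hq
  obtain ⟨n, hen, hn⟩ := exists_orthogonal_norm_eq hE e
  have hpos : 0 < ‖e‖ ^ 2 := by positivity
  let D : ℝ × ℝ → E := fun p => p.1 • e + p.2 • n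
  have hD : ∀ p r p', ⟪D p - D r, D p' - D r⟫ =
      ((p.1 - r.1) * (p'.1 - r.1) + (p.2 - r.2) * (p'.2 - r.2)) * ‖e‖ ^ 2 := fun p r p' => by
    rw [← inner_smul_add_smul_of_orthogonal hen hn]
    congr 1 <;> module
  have hDe : ∀ p r, ⟪D p - D r, e⟫ = (p.1 - r.1) * ‖e‖ ^ 2 := fun p r => by
    have h := inner_smul_add_smul_of_orthogonal hen hn (p.1 - r.1) (p.2 - r.2) 1 0
    rw [one_smul, zero_smul, add_zero, mul_one, mul_zero, add_zero] at h
    rw [← h]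
    congr 1
    module
  have hdir : ∀ p r v, EqOrAdj H q v → (v ≠ q → r.1 ≤ p.1) → 0 ≤ ⟪D p - D r, φ v - φ q⟫ := by
    rintro p r v (rfl | hv) h
    · rw [sub_self, inner_zero_right]
    · rw [he v hv, hDe]
      exact mul_nonneg (sub_nonneg.2 (h hv.ne')) hpos.le
  refine hφ.exists_of_isSplitting hf (D ∘ c) (D s) (fun u v z huv hu hz hzu hzv => ?_)
    (fun u v huv hu => ?_) (fun u v huv hu hv => ?_)
  · obtain ⟨hfirst, hsecond⟩ := hvertex u v z huv hu hz hzu hzv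
    exact ⟨hdir _ _ _ (hu ▸ hf.map_eqOrAdj huv) hfirst, (hD _ _ _).symm ▸ mul_pos hsecond hpos⟩
  · obtain ⟨hfirst, hsecond⟩ := hnew u v huv hu
    exact ⟨hdir _ _ _ (hu ▸ hf.map_eqOrAdj huv) hfirst, (hD _ _ _).symm ▸ mul_pos hsecond hpos⟩
  · rcases hsep u v huv hu hv with ⟨hvq, hneg⟩ | ⟨hvq, hneg⟩
    · refine Or.inl ?_
      rw [he _ (hv.resolve_left (Ne.symm hvq))]
      exact (hDe _ _).symm ▸ mul_neg_of_neg_of_pos (sub_neg.2 hneg) hpos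
    · exact Or.inr ⟨congrArg φ hvq, (hD _ _ _).symm ▸ mul_neg_of_neg_of_pos hneg hpos⟩

end Splitting

/-- The map that sends the vertex `a` to the remaining vertex `q` and fixes all other vertices. -/
def collapse {V : Type*} (a : V) (q : ↥({a}ᶜ : Set V)) (v : V) : ↥({a}ᶜ : Set V) :=
  open Classical in if h : v = a then q else ⟨v, h⟩

section VertexRemoval

variable {V : Type*} {a : V} {q : ↥({a}ᶜ : Set V)}

theorem collapse_self (a : V) (q : ↥({a}ᶜ : Set V)) : collapse a q a = q := dif_pos rfl

theorem collapse_coe (q v : ↥({a}ᶜ : Set V)) : collapse a q v = v := dif_neg v.2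

theorem collapse_eq_iff {v : V} : collapse a q v = q ↔ v = a ∨ v = q := by
  by_cases hv : v = a
  · simp only [hv, collapse_self, true_or]
  · lift v to ↥({a}ᶜ : Set V) using hv
    rw [collapse_coe, Subtype.ext_iff, or_iff_right (Set.mem_compl_singleton_iff.1 v.2)]

theorem exists_coe_eq_of_collapse_ne {v : V} (hv : collapse a q v ≠ q) :
    ∃ v' : ↥({a}ᶜ : Set V), (v' : V) = v :=
  ⟨⟨v, fun h => hv (collapse_eq_iff.2 (Or.inl h))⟩, rfl⟩

theorem eq_or_eqOrAdj_of_induce_collapse {G : SimpleGraph V} {v : V}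
    (h : EqOrAdj (G.induce {a}ᶜ) q (collapse a q v)) : v = a ∨ EqOrAdj G q v := by
  by_cases hv : v = a
  · exact Or.inl hv
  · lift v to ↥({a}ᶜ : Set V) using hv
    rw [collapse_coe] at h
    exact Or.inr (eqOrAdj_induce_iff.1 h)

theorem isSplitting_collapse {G : SimpleGraph V} (h : ∀ v, G.Adj a v → EqOrAdj G q v) :
    IsSplitting G (G.induce {a}ᶜ) (collapse a q) q where
  map_eqOrAdj := by
    have hadj : ∀ v, EqOrAdj G a v → EqOrAdj (G.induce {a}ᶜ) q (collapse a q v) := by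
      rintro v (rfl | hav)
      · exact Or.inl (collapse_self _ q).symm
      · lift v to ↥({a}ᶜ : Set V) using hav.ne'
        rw [collapse_coe]
        exact eqOrAdj_induce_iff.2 (h v hav)
    intro u v huv
    by_cases hu : u = a
    · rw [hu, collapse_self]
      exact hadj v (hu ▸ huv)
    by_cases hv : v = a
    · rw [hv, collapse_self]
      exact (hadj u (hv ▸ huv.symm)).symm
    lift u to ↥({a}ᶜ : Set V) using hu
    lift v to ↥({a}ᶜ : Set V) using hv
    rw [collapse_coe, collapse_coe]
    exact eqOrAdj_induce_iff.2 huv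
  eqOrAdj_of_map := by
    intro u v hu hv huv
    obtain ⟨u, rfl⟩ := exists_coe_eq_of_collapse_ne hu
    obtain ⟨v, rfl⟩ := exists_coe_eq_of_collapse_ne hv
    rw [collapse_coe, collapse_coe] at huv
    exact eqOrAdj_induce_iff.1 huv
  injective_off := by
    intro u v hu huv
    obtain ⟨u, rfl⟩ := exists_coe_eq_of_collapse_ne hu
    obtain ⟨v, rfl⟩ := exists_coe_eq_of_collapse_ne (huv ▸ hu)
    rw [collapse_coe, collapse_coe] at huv
    rw [huv]

variable {E : Type*} [NormedAddCommGroup E] [InnerProductSpace ℝ E] {G : SimpleGraph V}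

theorem IsRobustDrawing.exists_of_twin [Finite V] {x : V} (hE : 1 < Module.rank ℝ E)
    {φ : ↥({a}ᶜ : Set V) → E} {W : Finset E} (hφ : IsRobustDrawing (G.induce {a}ᶜ) φ W)
    (ha : G.neighborSet a = {x}) (hq : G.neighborSet q = {x}) :
    ∃ (φ' : V → E) (W' : Finset E), IsRobustDrawing G φ' W' := by
  classical
  have hEa : ∀ v, EqOrAdj G a v ↔ v = a ∨ v = x := fun _ =>
    eqOrAdj_iff_of_neighborSet_eq_singleton ha
  have hEq : ∀ v, EqOrAdj G q v ↔ v = q ∨ v = x := fun _ =>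
    eqOrAdj_iff_of_neighborSet_eq_singleton hq
  have hqa : (q : V) ≠ a := q.2
  have hxa : x ≠ a := (ha.superset rfl : G.Adj a x).ne'
  have hxq : x ≠ q := (hq.superset rfl : G.Adj q x).ne'
  have hf : IsSplitting G (G.induce {a}ᶜ) (collapse a q) q :=
    isSplitting_collapse fun v hv => Or.inr (hq.superset (ha.subset hv))
  obtain ⟨c, hca, hcq, hcx⟩ : ∃ c : V → ℝ × ℝ, c a = (0, -1) ∧ c q = (0, 1) ∧ c x = (0, 0) :=
    ⟨fun v => if v = a then (0, -1) else if v = q then (0, 1) else (0, 0), by simp [hqa, hxa, hxq]⟩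
  refine hφ.exists_of_isSplitting_of_neighborSet_subsingleton hE hf ?_ c (-1 / 2, 0) ?_ ?_ ?_
  · exact fun u hu v hv => Subtype.ext ((hq.subset hu).trans (hq.subset hv).symm)
  · intro u v z huv hu hz hzu hzv
    rcases collapse_eq_iff.1 hu with rfl | rfl <;> rcases collapse_eq_iff.1 hz with rfl | rfl
    · exact (hzu rfl).elim
    · rcases (hEa v).1 huv with rfl | rfl <;> norm_num [hca, hcq, hcx]
    · rcases (hEq v).1 huv with rfl | rfl <;> norm_num [hca, hcq, hcx]
    · exact (hzu rfl).elim
  · intro u v huv hu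
    rcases collapse_eq_iff.1 hu with rfl | rfl
    · rcases (hEa v).1 huv with rfl | rfl <;> norm_num [hca, hcx]
    · rcases (hEq v).1 huv with rfl | rfl <;> norm_num [hcq, hcx]
  · intro u v huv hu hv
    have hvx : v ≠ x := by
      rintro rfl
      rcases collapse_eq_iff.1 hu with rfl | rfl
      · exact huv ((hEa v).2 (Or.inr rfl))
      · exact huv ((hEq v).2 (Or.inr rfl))
    have hvq : v = a ∨ v = q := (eq_or_eqOrAdj_of_induce_collapse hv).imp_right fun h =>
      ((hEq v).1 h).resolve_right hvx
    refine Or.inr ⟨collapse_eq_iff.2 hvq, ?_⟩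
    rcases collapse_eq_iff.1 hu with rfl | rfl <;> rcases hvq with rfl | rfl
    · exact (huv (Or.inl rfl)).elim
    · norm_num [hca, hcq]
    · norm_num [hca, hcq]
    · exact (huv (Or.inl rfl)).elim

theorem IsRobustDrawing.exists_of_pendant [Finite V] (hE : 1 < Module.rank ℝ E)
    {φ : ↥({a}ᶜ : Set V) → E} {W : Finset E} (hφ : IsRobustDrawing (G.induce {a}ᶜ) φ W)
    (ha : G.neighborSet a = {↑q}) (hq : (G.neighborSet q \ {a}).Subsingleton) :
    ∃ (φ' : V → E) (W' : Finset E), IsRobustDrawing G φ' W' := by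
  classical
  have hEa : ∀ v, EqOrAdj G a v ↔ v = a ∨ v = q := fun _ =>
    eqOrAdj_iff_of_neighborSet_eq_singleton ha
  have hqa : (q : V) ≠ a := q.2
  have hf : IsSplitting G (G.induce {a}ᶜ) (collapse a q) q :=
    isSplitting_collapse fun v hv => Or.inl (ha.subset hv).symm
  obtain ⟨c, hca, hc⟩ : ∃ c : V → ℝ × ℝ, c a = (-2, 0) ∧ ∀ v, v ≠ a → c v = (0, 0) :=
    ⟨fun v => if v = a then (-2, 0) else (0, 0), if_pos rfl, fun _ hv => if_neg hv⟩
  refine hφ.exists_of_isSplitting_of_neighborSet_subsingleton hE hf ?_ c (-1, 2) ?_ ?_ ?_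
  · exact fun u hu v hv => Subtype.ext (hq ⟨hu, u.2⟩ ⟨hv, v.2⟩)
  · intro u v z huv hu hz hzu hzv
    rcases collapse_eq_iff.1 hu with rfl | rfl <;> rcases collapse_eq_iff.1 hz with rfl | rfl
    · exact (hzu rfl).elim
    · rcases (hEa v).1 huv with rfl | rfl
      · norm_num [hca, hc _ hqa, collapse_self]
      · exact (hzv rfl).elim
    · norm_num [hca, hc _ hqa, hc _ hzv.symm]
    · exact (hzu rfl).elim
  · intro u v huv hu
    rcases collapse_eq_iff.1 hu with rfl | rfl
    · rcases (hEa v).1 huv with rfl | rfl <;>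
        norm_num [hca, hc _ hqa, collapse_self, collapse_coe]
    · by_cases hva : v = a
      · norm_num [hva, hca, hc _ hqa]
      · norm_num [hc _ hva, hc _ hqa]
  · intro u v huv hu hv
    have hva : v ≠ a := by
      rintro rfl
      exact huv ((collapse_eq_iff.1 hu).elim Or.inl fun h => ((hEa u).2 (Or.inr h)).symm)
    have hqv : EqOrAdj G q v := (eq_or_eqOrAdj_of_induce_collapse hv).resolve_left hva
    have hua : u = a := (collapse_eq_iff.1 hu).resolve_right fun huq => huv (huq ▸ hqv)
    subst hua
    refine Or.inl ⟨fun h => huv ((hEa v).2 (collapse_eq_iff.1 h)), ?_⟩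
    norm_num [hca]

theorem EqOrAdj.eq_or_induce_of_isolated (ha : G.neighborSet a = ∅) {u v : V}
    (huv : EqOrAdj G u v) : (u = a ∧ v = a) ∨
      ∃ u' v' : ↥({a}ᶜ : Set V), u = u' ∧ v = v' ∧ EqOrAdj (G.induce {a}ᶜ) u' v' := by
  have hiso : ∀ v, ¬G.Adj a v := Set.eq_empty_iff_forall_notMem.1 ha
  by_cases hu : u = a
  · subst hu
    exact Or.inl ⟨rfl, (huv.resolve_right (hiso v)).symm⟩
  · have hv : v ≠ a := by
      rintro rfl
      exact huv.elim hu fun h => hiso u h.symm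
    exact Or.inr ⟨⟨u, hu⟩, ⟨v, hv⟩, rfl, rfl, eqOrAdj_induce_iff.2 huv⟩

theorem IsRobustDrawing.insert_of_isolated [DecidableEq E] (ha : G.neighborSet a = ∅) {φ : V → E}
    {W : Finset E} {c : E} (hφ : IsRobustDrawing (G.induce {a}ᶜ) (fun v => φ v) W)
    (haW : φ a ∉ insert c W)
    (hvertex : ∀ u v : ↥({a}ᶜ : Set V), 0 < ⟪φ u - φ a, φ v - φ a⟫)
    (hwitness : ∀ u v : ↥({a}ᶜ : Set V), 0 < ⟪φ u - c, φ v - c⟫)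
    (hsep : ∀ v : ↥({a}ᶜ : Set V), ⟪φ a - c, φ v - c⟫ < 0) :
    IsRobustDrawing G φ (insert c W) where
  witness_outside := by
    intro u v huv w hw
    rcases huv.eq_or_induce_of_isolated ha with ⟨rfl, rfl⟩ | ⟨u, v, rfl, rfl, huv'⟩
    · exact real_inner_self_pos.2 (sub_ne_zero.2 fun h => haW (h ▸ hw))
    · rcases Finset.mem_insert.1 hw with rfl | hw
      · exact hwitness u v
      · exact hφ.witness_outside huv' w hw
  vertex_outside := by
    intro u v huv z hzu hzv
    rcases huv.eq_or_induce_of_isolated ha with ⟨rfl, rfl⟩ | ⟨u, v, rfl, rfl, huv'⟩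
    · have hne := real_inner_self_pos.1 (hvertex ⟨z, hzu⟩ ⟨z, hzu⟩)
      exact real_inner_self_pos.2 (sub_ne_zero.2 (sub_ne_zero.1 hne).symm)
    · by_cases hz : z = a
      · exact hz ▸ hvertex u v
      · exact hφ.vertex_outside huv' ⟨z, hz⟩ (mt (congrArg Subtype.val) hzu)
          (mt (congrArg Subtype.val) hzv)
  witness_inside := by
    intro u v huv
    by_cases hu : u = a
    · have hv : v ≠ a := fun hv => huv (Or.inl (hu.trans hv.symm))
      exact ⟨c, Finset.mem_insert_self _ _, hu ▸ hsep ⟨v, hv⟩⟩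
    by_cases hv : v = a
    · exact ⟨c, Finset.mem_insert_self _ _, by rw [real_inner_comm, hv]; exact hsep ⟨u, hu⟩⟩
    obtain ⟨w, hw, hneg⟩ :=
      hφ.witness_inside (u := ⟨u, hu⟩) (v := ⟨v, hv⟩) (mt eqOrAdj_induce_iff.1 huv)
    exact ⟨w, Finset.mem_insert_of_mem hw, hneg⟩

theorem IsRobustDrawing.exists_of_isolated [Finite V] [Nontrivial E]
    {φ : ↥({a}ᶜ : Set V) → E} {W : Finset E} (hφ : IsRobustDrawing (G.induce {a}ᶜ) φ W)
    (ha : G.neighborSet a = ∅) : ∃ (φ' : V → E) (W' : Finset E), IsRobustDrawing G φ' W' := by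
  classical
  let S : Set E := insert 0 (Set.range φ ∪ W)
  have hφS : ∀ v, φ v ∈ S := fun v => Or.inr (Or.inl ⟨v, rfl⟩)
  obtain ⟨c, hc⟩ := exists_inner_sub_pos_and_inner_sub_two_smul_pos
    (((Set.finite_range φ).union W.finite_toSet).insert 0 : S.Finite)
  obtain ⟨φ', hφ'a, hφ'⟩ :
      ∃ φ' : V → E, φ' a = (2 : ℝ) • c ∧ ∀ v : ↥({a}ᶜ : Set V), φ' v = φ v :=
    ⟨fun v => if h : v = a then (2 : ℝ) • c else φ ⟨v, h⟩, dif_pos rfl, fun v => dif_neg v.2⟩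
  have h2cS : (2 : ℝ) • c ∉ S := fun h => by
    simpa only [sub_self, inner_zero_left, lt_irrefl] using (hc _ h _ h).2
  have hcc : (2 : ℝ) • c ≠ c := fun h => h2cS <| by
    rw [two_smul, add_eq_left] at h
    rw [h, smul_zero]
    exact Set.mem_insert 0 _
  have haW : φ' a ∉ insert c W := by
    rw [hφ'a, Finset.mem_insert, not_or]
    exact ⟨hcc, fun h => h2cS (Or.inr (Or.inr h))⟩
  have hsep : ∀ v : ↥({a}ᶜ : Set V), ⟪φ' a - c, φ' v - c⟫ < 0 := fun v => by
    have hpos := (hc 0 (Set.mem_insert 0 _) _ (hφS v)).1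
    rw [zero_sub, inner_neg_left, Left.neg_pos_iff] at hpos
    rwa [hφ'a, hφ', two_smul, add_sub_cancel_right]
  refine ⟨φ', insert c W, .insert_of_isolated ha (by simpa only [hφ'] using hφ) haW
    (fun u v => ?_) (fun u v => ?_) hsep⟩
  · rw [hφ', hφ', hφ'a]
    exact (hc _ (hφS u) _ (hφS v)).2
  · rw [hφ', hφ']
    exact (hc _ (hφS u) _ (hφS v)).1

theorem exists_isRobustDrawing_of_isAcyclic [Finite V] (hE : 1 < Module.rank ℝ E)
    (hG : G.IsAcyclic) : ∃ (φ : V → E) (W : Finset E), IsRobustDrawing G φ W := by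
  have : Nontrivial E := rank_pos_iff_nontrivial.1 (zero_lt_one.trans hE)
  induction hcard : Nat.card V using Nat.strong_induction_on generalizing V with
  | _ n ih =>
    rcases isEmpty_or_nonempty V with hV | hV
    · exact ⟨isEmptyElim, ∅, fun u => isEmptyElim u, fun u => isEmptyElim u, fun u => isEmptyElim u⟩
    have hremove : ∀ a : V, ∃ (φ : ↥({a}ᶜ : Set V) → E) (W : Finset E),
        IsRobustDrawing (G.induce {a}ᶜ) φ W := fun a =>
      ih _ (hcard ▸ Finite.card_subtype_lt (x := a) (not_not.2 rfl)) (hG.induce _) rfl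
    rcases exists_isolated_or_pendant_or_twin hG with
      ⟨a, ha⟩ | ⟨a, q, ha, hq⟩ | ⟨a, q, x, hqa, ha, hq⟩
    · obtain ⟨φ, W, hφ⟩ := hremove a
      exact hφ.exists_of_isolated ha
    · obtain ⟨φ, W, hφ⟩ := hremove a
      have hqa : G.Adj a q := ha.superset rfl
      exact hφ.exists_of_pendant (q := ⟨q, hqa.ne'⟩) hE ha hq
    · obtain ⟨φ, W, hφ⟩ := hremove a
      exact hφ.exists_of_twin (q := ⟨q, hqa⟩) hE ha hq

end VertexRemoval

theorem IsRobustDrawing.adj_iff_gabrielEdge {V : Type*} {G : SimpleGraph V} {φ : V → Pt}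
    {W : Finset Pt} (hφ : IsRobustDrawing G φ W) {u v : V} (huv : u ≠ v) :
    G.Adj u v ↔ gabrielEdge W (φ u) (φ v) := by
  rw [gabrielEdge, diskD, ← Set.disjoint_iff_inter_eq_empty, Set.disjoint_left]
  constructor
  · rintro hadj w ⟨hw, -⟩ hwW
    exact (hφ.witness_outside (Or.inr hadj) w hwW).not_ge
      (mem_closedBall_midpoint_iff_inner_nonpos.1 hw)
  · refine fun hempty => by_contra fun hadj => ?_
    obtain ⟨w, hwW, hneg⟩ := hφ.witness_inside (not_or.2 ⟨huv, hadj⟩)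
    refine hempty ⟨mem_closedBall_midpoint_iff_inner_nonpos.2 hneg.le, ?_⟩ hwW
    rintro (rfl | rfl)
    · exact hneg.ne (by rw [sub_self, inner_zero_left])
    · exact hneg.ne (by rw [sub_self, inner_zero_right])

theorem tree_witness_gabriel_drawable_general {V : Type*} [Finite V] (T : SimpleGraph V)
    (hacyc : T.IsAcyclic) :
    ∃ (φ : V → Pt) (W : Finset Pt), Function.Injective φ ∧
      ∀ u v : V, u ≠ v → (T.Adj u v ↔ gabrielEdge (W : Set Pt) (φ u) (φ v)) := by
  have hrank : 1 < Module.rank ℝ Pt :=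
    Module.lt_rank_of_lt_finrank (by rw [finrank_euclideanSpace_fin]; exact one_lt_two)
  obtain ⟨φ, W, hφ⟩ := exists_isRobustDrawing_of_isAcyclic hrank hacyc
  exact ⟨φ, W, hφ.injective, fun _ _ => hφ.adj_iff_gabrielEdge⟩

/-- Every finite tree can be drawn as a witness Gabriel graph. -/
theorem tree_witness_gabriel_drawable
    {V : Type} [Fintype V] (T : SimpleGraph V)
    (hconn : T.Connected) (hacyc : T.IsAcyclic) :
    ∃ (φ : V → Pt) (W : Finset Pt), Function.Injective φ ∧
      ∀ u v : V, u ≠ v →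
        (T.Adj u v ↔ gabrielEdge (W : Set Pt) (φ u) (φ v)) :=
  tree_witness_gabriel_drawable_general T hacyc
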